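/- Let L₁, L₂, C₁, C₂, f₁, f₂, R be strictly positive reals and β₁, β₂ reals, and suppose (1 − β₁)·L₁·C₁/f₁ = (1 − β₂)·L₂·C₂/f₂ and (1 − β₁)·L₁·C₁/f₁ = (β₁L₁ + β₂L₂)/R. Then (β₁L₁ + β₂L₂)/R = (L₁ + L₂)/(f₁/C₁ + f₂/C₂ + R), provided f₁/C₁ + f₂/C₂ + R ≠ 0 (which holds since all quantities are positive). -/

import Mathlib

/-- Appendix E identity: if each user's local computing time equals the common offloading
time, then the common completion time equals `(L₁+L₂)/(f₁/C₁ + f₂/C₂ + R)`. -/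
theorem stmt_5 (L1 L2 C1 C2 f1 f2 R β1 β2 : ℝ)
    (hL1 : 0 < L1) (hL2 : 0 < L2) (hC1 : 0 < C1) (hC2 : 0 < C2)
    (hf1 : 0 < f1) (hf2 : 0 < f2) (hR : 0 < R)
    (h1 : (1 - β1) * L1 * C1 / f1 = (1 - β2) * L2 * C2 / f2)
    (h2 : (1 - β1) * L1 * C1 / f1 = (β1 * L1 + β2 * L2) / R) :
    (β1 * L1 + β2 * L2) / R = (L1 + L2) / (f1 / C1 + f2 / C2 + R) := by
  have hpos : 0 < f1 / C1 + f2 / C2 + R := by positivity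
  have h3 := h1.symm.trans h2
  generalize hT : (β1 * L1 + β2 * L2) / R = T at h2 h3 ⊢
  rw [eq_div_iff hpos.ne']
  rw [div_eq_iff hf1.ne'] at h2
  rw [div_eq_iff hf2.ne'] at h3
  rw [div_eq_iff hR.ne'] at hT
  have e1 : T * (f1 / C1) = (1 - β1) * L1 := by
    rw [← mul_div_assoc, div_eq_iff hC1.ne']
    exact h2.symm
  have e2 : T * (f2 / C2) = (1 - β2) * L2 := by
    rw [← mul_div_assoc, div_eq_iff hC2.ne']
    exact h3.symm
  linear_combination e1 + e2 - hT
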